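/- arXiv:1906.08536 — 6 statements merged into one kernel-verified Lean document; each statement's English description precedes it below -/
import Mathlib

section
/- Let R be a semi-local integral domain with field of fractions F, and let a, b, s, t be nonzero elements of R such that 1+as ≠ 0 and 1+bt ≠ 0. Then the following identity holds in K^M_2(F): if 1+(1+bt)as ≠ 0, then {1+as, 1+bt} = −{1 + (ab/(1+as))·st, −as(1+bt)}; and if 1+(1+bt)as = 0, then {1+as, 1+bt} = 0. -/
/-! Write `x = as`, `y = bt`, `u = 1 + x`, `v = 1 + y`. Two facts drive the computation:
`1 + x(1 + y) = u + xy`, so that `w = (1 + xv) / u`, and the Steinberg relation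
`{1 + q, -q} = 0`, applied to `q = x` and `q = xv`. By bilinearity
`{w, -xv} = {1 + xv, -xv} - {u, -x} - {u, v} = -{u, v}`.
If `1 + xv = 0`, then `(-x) v = 1`, hence `{u, v} = {u, -x} + {u, v} = {u, 1} = 0`. -/

/-- The degree-`n` relations defining Milnor K-theory of a commutative ring `A`:
multilinearity relations and Steinberg relations among generators indexed by
`n`-tuples of units.  This presents exactly the degree-`n` piece of the quotient of
the tensor algebra of the unit group by the homogeneous ideal generated by the
elements `a ⊗ (1 - a)`. -/
def MilnorRel (A : Type*) [CommRing A] (n : ℕ) :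
    AddSubgroup (FreeAbelianGroup (Fin n → Aˣ)) :=
  AddSubgroup.closure
    ({x | ∃ (c : Fin n → Aˣ) (i : Fin n) (a b : Aˣ),
        x = FreeAbelianGroup.of (Function.update c i (a * b)) -
            FreeAbelianGroup.of (Function.update c i a) -
            FreeAbelianGroup.of (Function.update c i b)} ∪
      {x | ∃ (c : Fin n → Aˣ) (i j : Fin n), (j : ℕ) = (i : ℕ) + 1 ∧
        ((c i : A) + ((c j : A)) = 1) ∧ x = FreeAbelianGroup.of c})

/-- The `n`-th Milnor K-group of a commutative ring `A`. -/
def MilnorK (A : Type*) [CommRing A] (n : ℕ) : Type _ :=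
  FreeAbelianGroup (Fin n → Aˣ) ⧸ MilnorRel A n

noncomputable instance (A : Type*) [CommRing A] (n : ℕ) : AddCommGroup (MilnorK A n) :=
  QuotientAddGroup.Quotient.addCommGroup (MilnorRel A n)

/-- The Milnor symbol `{c 0, …, c (n-1)}` in `MilnorK A n`. -/
def MilnorSymbol {A : Type*} [CommRing A] {n : ℕ} (c : Fin n → Aˣ) : MilnorK A n :=
  QuotientAddGroup.mk (FreeAbelianGroup.of c)

theorem milnorSymbol_mul_left {A : Type*} [CommRing A] (p q r : Aˣ) :
    MilnorSymbol ![p * q, r] = MilnorSymbol ![p, r] + MilnorSymbol ![q, r] := by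
  rw [← sub_eq_zero, ← sub_sub]
  refine (QuotientAddGroup.eq_zero_iff (N := MilnorRel A 2) _).2
    (AddSubgroup.subset_closure (Or.inl ⟨![p, r], 0, p, q, ?_⟩))
  have e (x : Aˣ) : Function.update ![p, r] 0 x = ![x, r] := by
    funext j
    fin_cases j <;> rfl
  rw [e, e, e]

theorem milnorSymbol_mul_right {A : Type*} [CommRing A] (p q r : Aˣ) :
    MilnorSymbol ![p, q * r] = MilnorSymbol ![p, q] + MilnorSymbol ![p, r] := by
  rw [← sub_eq_zero, ← sub_sub]
  refine (QuotientAddGroup.eq_zero_iff (N := MilnorRel A 2) _).2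
    (AddSubgroup.subset_closure (Or.inl ⟨![p, q], 1, q, r, ?_⟩))
  have e (x : Aˣ) : Function.update ![p, q] 1 x = ![p, x] := by
    funext j
    fin_cases j <;> rfl
  rw [e, e, e]

theorem milnorSymbol_steinberg {A : Type*} [CommRing A] (p q : Aˣ) (h : (p : A) + q = 1) :
    MilnorSymbol ![p, q] = 0 :=
  (QuotientAddGroup.eq_zero_iff (N := MilnorRel A 2) _).2
    (AddSubgroup.subset_closure (Or.inr ⟨![p, q], 0, 1, rfl, h, rfl⟩))

theorem milnorSymbol_one_right {A : Type*} [CommRing A] (p : Aˣ) :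
    MilnorSymbol ![p, 1] = 0 := by
  simpa using milnorSymbol_mul_right p 1 1

/-- Lemma 3.3 (`lem:Elem-Milnor`): an identity in `K^M_2(F)` for the fraction field `F`
of a semi-local integral domain `R`. -/
theorem stmt0 (R F : Type*) [CommRing R] [IsDomain R] [Finite (MaximalSpectrum R)]
    [Field F] [Algebra R F] [IsFractionRing R F]
    (a b s t : R) (ha : a ≠ 0) (hb : b ≠ 0) (hs : s ≠ 0) (ht : t ≠ 0)
    (h1 : 1 + a * s ≠ 0) (h2 : 1 + b * t ≠ 0)
    (u v : Fˣ) (hu : (u : F) = algebraMap R F (1 + a * s))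
    (hv : (v : F) = algebraMap R F (1 + b * t)) :
    (1 + (1 + b * t) * a * s ≠ 0 →
      ∃ w z : Fˣ,
        (w : F) = 1 + (algebraMap R F (a * b) / algebraMap R F (1 + a * s)) *
            algebraMap R F (s * t) ∧
        (z : F) = -(algebraMap R F (a * s) * algebraMap R F (1 + b * t)) ∧
        MilnorSymbol ![u, v] = -MilnorSymbol ![w, z]) ∧
    (1 + (1 + b * t) * a * s = 0 → MilnorSymbol ![u, v] = (0 : MilnorK F 2)) := by
  have inj := IsFractionRing.injective R F
  have hx : algebraMap R F (a * s) ≠ 0 :=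
    (map_ne_zero_iff _ inj).2 (mul_ne_zero ha hs)
  -- `m = -x`, a unit of `F` with `u + m = 1`.
  let m : Fˣ := Units.mk0 (-algebraMap R F (a * s)) (neg_ne_zero.2 hx)
  have hm : (m : F) = -algebraMap R F (a * s) := rfl
  have hum : MilnorSymbol ![u, m] = 0 :=
    milnorSymbol_steinberg u m (by rw [hu, hm, map_add, map_one]; ring)
  constructor
  · intro h
    let n : Fˣ := Units.mk0 (algebraMap R F (1 + (1 + b * t) * a * s))
      ((map_ne_zero_iff _ inj).2 h)
    have hn : (n : F) = algebraMap R F (1 + (1 + b * t) * a * s) := rfl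
    have hnz : MilnorSymbol ![n, m * v] = 0 :=
      milnorSymbol_steinberg n (m * v) (by
        rw [Units.val_mul, hn, hm, hv]
        simp only [map_add, map_mul, map_one]
        ring)
    refine ⟨n * u⁻¹, m * v, ?_, ?_, ?_⟩
    · have hu0 : algebraMap R F (1 + a * s) ≠ 0 := (map_ne_zero_iff _ inj).2 h1
      rw [Units.val_mul, Units.val_inv_eq_inv_val, hn, hu]
      field_simp
      simp only [map_add, map_mul, map_one]
      ring
    · rw [Units.val_mul, hm, hv, neg_mul]
    · have key := milnorSymbol_mul_left (n * u⁻¹) u (m * v)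
      rw [inv_mul_cancel_right, hnz, milnorSymbol_mul_right u, hum, zero_add] at key
      exact eq_neg_of_add_eq_zero_right key.symm
  · intro h
    have hmv : m * v = 1 := by
      ext
      have h' := congrArg (algebraMap R F) h
      rw [Units.val_mul, hm, hv, Units.val_one]
      simp only [map_add, map_mul, map_one, map_zero] at h' ⊢
      linear_combination -h'
    have key := milnorSymbol_mul_right u m v
    rw [hmv, milnorSymbol_one_right, hum, zero_add] at key
    exact key.symm
end

section
/- Let R be a semi-local commutative ring which contains an infinite field k. Then every element a ∈ R can be written as a = u_1 + u_2, where u_1 is a nonzero element of k (hence a unit of R) and u_2 is a unit of R. -/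
/-!
If `a - u` were a non-unit for every nonzero `u` in `k`, each such `u` would have a maximal ideal
containing `a - u`. There are infinitely many `u` and finitely many maximal ideals, so two
distinct scalars `u`, `v` share one; it contains `v - u`, a nonzero element of the field `k` and
hence a unit of `R`, which is absurd.
-/

/-- Lemma 7.8 (`lem:Local*`): in a semi-local ring `R` containing an infinite field `k`,
every element `a` can be written as `a = u₁ + u₂` with `u₁` a nonzero element of `k`
and `u₂` a unit of `R`. -/
theorem stmt6 (k R : Type*) [Field k] [Infinite k] [CommRing R] [Algebra k R]
    [Finite (MaximalSpectrum R)] (hinj : Function.Injective (algebraMap k R)) (a : R) :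
    ∃ (u₁ : k) (u₂ : Rˣ), u₁ ≠ 0 ∧ a = algebraMap k R u₁ + (u₂ : R) := by
  -- It suffices that `a - u` is a unit for some nonzero `u` in `k`.
  suffices h : ∃ u : k, u ≠ 0 ∧ IsUnit (a - algebraMap k R u) by
    obtain ⟨u, hu, v, hv⟩ := h
    exact ⟨u, v, hu, by rw [hv]; ring⟩
  by_contra! h
  have hM (u : ({0}ᶜ : Set k)) : ∃ M : MaximalSpectrum R, a - algebraMap k R u ∈ M.asIdeal := by
    obtain ⟨M, hM, hmem⟩ := exists_max_ideal_of_mem_nonunits (h u u.2)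
    exact ⟨⟨M, hM⟩, hmem⟩
  choose M hM using hM
  have : Infinite ({0}ᶜ : Set k) := (Set.finite_singleton (0 : k)).infinite_compl.to_subtype
  -- Pigeonhole: two distinct scalars share a maximal ideal, which then contains their
  -- difference, a unit.
  obtain ⟨u, v, huv, hMuv⟩ := Finite.exists_ne_map_eq_of_infinite M
  have hmem : algebraMap k R ((v : k) - u) ∈ (M u).asIdeal := by
    have := (M u).asIdeal.sub_mem (hM u) (hMuv ▸ hM v)
    rwa [sub_sub_sub_cancel_left, ← map_sub] at this
  have hne : (v : k) - u ≠ 0 := sub_ne_zero.mpr fun e => huv (Subtype.ext e.symm)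
  exact (M u).isMaximal.ne_top
    (Ideal.eq_top_of_isUnit_mem _ hmem ((IsUnit.mk0 _ hne).map (algebraMap k R)))
end

section
/- Let R be a semi-local commutative ring containing an infinite field and let n ≥ 1 be an integer. Then the n-th exterior power Ω^n_{R/ℤ} of the module of Kähler differentials of R over ℤ is generated as an R-module by the elements u_1^{-1}du_1 ∧ ⋯ ∧ u_n^{-1}du_n, where u_1, …, u_n range over the units of R. -/
/-!
The module `Ω[R⁄ℤ]` is spanned by the logarithmic differentials `u⁻¹ du` of units, and hence its
`n`-th exterior power is spanned by their `n`-fold wedge products. Indeed `Ω[R⁄ℤ]` is spanned by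
all `dx`, and `dx = d(x + c) - dc` for `c` in the infinite field `k`. For a maximal ideal `m`
at most one `c : k` has `x + c ∈ m`, because the difference of two such `c` would be a unit of
`R` in `m`. As there are finitely many maximal ideals, some nonzero `c` makes `x + c` a unit, so
both `x + c` and `c` are units.
-/

/-- In a semi-local ring containing an infinite field, every element can be translated to a unit
by a nonzero scalar. -/
lemma exists_ne_zero_isUnit_add_algebraMap (k : Type*) {R : Type*} [Field k] [Infinite k]
    [CommRing R] [Algebra k R] [Finite (MaximalSpectrum R)] (x : R) :
    ∃ c : k, c ≠ 0 ∧ IsUnit (x + algebraMap k R c) := by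
  have hfin : ∀ m : MaximalSpectrum R,
      {c : k | x + algebraMap k R c ∈ m.asIdeal}.Finite := by
    refine fun m => Set.Subsingleton.finite fun a ha b hb => ?_
    by_contra hab
    have hmem : algebraMap k R (a - b) ∈ m.asIdeal := by
      have := m.asIdeal.sub_mem ha hb
      rwa [add_sub_add_left_eq_sub, ← map_sub] at this
    exact m.isMaximal.ne_top (Ideal.eq_top_of_isUnit_mem _ hmem
      ((sub_ne_zero.mpr hab).isUnit.map (algebraMap k R)))
  obtain ⟨c, hc⟩ := ((Set.finite_iUnion hfin).union (Set.finite_singleton (0 : k))).exists_notMem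
  simp only [Set.mem_union, Set.mem_iUnion, Set.mem_ofPred_eq, Set.mem_singleton_iff, not_or,
    not_exists] at hc
  refine ⟨c, hc.2, ?_⟩
  by_contra hu
  obtain ⟨m, hm, hxm⟩ := exists_max_ideal_of_mem_nonunits hu
  exact hc.1 ⟨m, hm⟩ hxm

lemma span_range_unit_inv_smul_D_eq_top (k R : Type*) [Field k] [Infinite k] [CommRing R]
    [Algebra k R] [Finite (MaximalSpectrum R)] :
    Submodule.span R (Set.range fun u : Rˣ =>
      ((↑u⁻¹ : R) • KaehlerDifferential.D ℤ R (u : R))) = ⊤ := by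
  rw [eq_top_iff, ← KaehlerDifferential.span_range_derivation, Submodule.span_le]
  have hunit : ∀ u : Rˣ, KaehlerDifferential.D ℤ R (u : R) ∈
      Submodule.span R (Set.range fun u : Rˣ =>
        ((↑u⁻¹ : R) • KaehlerDifferential.D ℤ R (u : R))) := by
    intro u
    have h := Submodule.smul_mem _ (u : R) (Submodule.subset_span (R := R)
      (Set.mem_range_self (f := fun u : Rˣ =>
        ((↑u⁻¹ : R) • KaehlerDifferential.D ℤ R (u : R))) u))
    simpa only [smul_smul, Units.mul_inv, one_smul] using h
  rintro _ ⟨x, rfl⟩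
  obtain ⟨c, hc, u, hu⟩ := exists_ne_zero_isUnit_add_algebraMap k x
  obtain ⟨v, hv⟩ := hc.isUnit.map (algebraMap k R)
  have hx : x = (u : R) - v := by rw [hu, hv, add_sub_cancel_right]
  rw [hx, map_sub]
  exact Submodule.sub_mem _ (hunit u) (hunit v)


/-- The surjectivity assertion in the proof of Lemma 7.7 (`lem:Milnor-surj`): for a
semi-local ring `R` containing an infinite field, the `n`-th exterior power
`Ω^n_{R/ℤ}` of the module of Kähler differentials is generated as an `R`-module by
the elements `u₁⁻¹ du₁ ∧ ⋯ ∧ uₙ⁻¹ duₙ` with the `uᵢ` units of `R`.  Here `Ω^n_{R/ℤ}`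
is realized as the submodule `⋀[R]^n (Ω[R⁄ℤ])` of the exterior algebra of
`Ω[R⁄ℤ] = KaehlerDifferential ℤ R`. -/
theorem stmt7 (k R : Type*) [Field k] [Infinite k] [CommRing R] [Algebra k R]
    [Finite (MaximalSpectrum R)] (hinj : Function.Injective (algebraMap k R))
    (n : ℕ) (hn : 1 ≤ n) :
    Submodule.span R
        {w : ExteriorAlgebra R (KaehlerDifferential ℤ R) | ∃ u : Fin n → Rˣ,
          w = ExteriorAlgebra.ιMulti R n fun i =>
            ((↑(u i)⁻¹ : R) • KaehlerDifferential.D ℤ R ((u i : R)))} =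
      ⋀[R]^n (KaehlerDifferential ℤ R) := by
  rw [← exteriorPower.ιMulti_span_fixedDegree_of_span_eq_top R n _
    (span_range_unit_inv_smul_D_eq_top k R)]
  congr 1
  ext w
  constructor
  · rintro ⟨u, rfl⟩
    exact ⟨_, by rintro _ ⟨i, rfl⟩; exact ⟨u i, rfl⟩, rfl⟩
  · rintro ⟨a, ha, rfl⟩
    choose u hu using fun i => ha (Set.mem_range_self i)
    exact ⟨u, congrArg _ (funext fun i => (hu i).symm)⟩
end

section
/- Let R be a commutative ring, m ≥ 0 and n ≥ 1 integers, and R_m = R[t]/(t^{m+1}). Then there is an isomorphism of R_m-modules Ω^n_{R_m/ℤ} ≅ (R_m ⊗_R Ω^n_{R/ℤ}) ⊕ (Ω^1_{R_m/R} ⊗_R Ω^{n-1}_{R/ℤ}), where Ω^j denotes the j-th exterior power of the module of Kähler differentials Ω^1. -/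
/-!
Write `A = R[t]/(t ^ (m + 1))`. The universal derivation of `R`, applied coefficientwise, descends
to a derivation `A → A ⊗_R Ω¹_R`. The induced map on differentials is a retraction of
`A ⊗_R Ω¹_R → Ω¹_A`, so the first fundamental exact sequence splits and
`Ω¹_A ≅ (A ⊗_R Ω¹_R) × Ω¹_{A/R}` (`kaehler_split`), where `Ω¹_{A/R}` is generated by `dt`
(`kaehler_cyclic`).

For a cyclic module `N` one has `⋀ᵏ⁺¹(M × N) ≅ ⋀ᵏ⁺¹ M × (N ⊗ ⋀ᵏ M)`
(`exteriorPower_prod_cyclic`), since a wedge with two factors from `N` vanishes. Taking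
`M = A ⊗_R Ω¹_R` and `N = Ω¹_{A/R}`, the result follows because exterior powers commute with base
change (`exteriorPowerFromBaseChange_bijective`) and `N ⊗_A (A ⊗_R Q) ≅ N ⊗_R Q`.

The differentials of `A` are handled for an arbitrary surjection `φ : R[X] → A` with kernel
`(X ^ (m + 1))`.
-/

open Polynomial

/-- The truncated polynomial ring `R_m = R[t]/(t^{m+1})`. -/
abbrev TruncPoly (R : Type*) [CommRing R] (m : ℕ) : Type _ :=
  R[X] ⧸ Ideal.span {(X : R[X]) ^ (m + 1)}

open scoped TensorProduct

noncomputable section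

/-! ### Exterior powers of `M × N` with `N` cyclic -/

section ExteriorProd

variable {A M N : Type*} [CommRing A] [AddCommGroup M] [Module A M] [AddCommGroup N] [Module A N]

/-- The map `⋀ᵏ⁺¹(M × N) → N ⊗ ⋀ᵏ M` contracting one factor with the second projection:
`v₀ ∧ ⋯ ∧ vₖ ↦ ∑ᵢ (-1)ⁱ snd vᵢ ⊗ (fst v₀ ∧ ⋯ omit i ⋯ ∧ fst vₖ)`. -/
def contractSnd (A M N : Type*) [CommRing A] [AddCommGroup M] [Module A M] [AddCommGroup N]
    [Module A N] (k : ℕ) : (⋀[A]^(k + 1) (M × N)) →ₗ[A] N ⊗[A] (⋀[A]^k M) :=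
  exteriorPower.alternatingMapLinearEquiv (AlternatingMap.alternatizeUncurryFin
    (exteriorPower.alternatingMapLinearEquiv.symm.toLinearMap ∘ₗ
      (TensorProduct.mk A N (⋀[A]^k M)).compl₁₂ (LinearMap.snd A M N)
        (exteriorPower.map k (LinearMap.fst A M N))))

lemma contractSnd_ιMulti (k : ℕ) (v : Fin (k + 1) → M × N) :
    contractSnd A M N k (exteriorPower.ιMulti A (k + 1) v) =
      ∑ i : Fin (k + 1), (-1) ^ (i : ℕ) •
        ((v i).2 ⊗ₜ[A] exteriorPower.ιMulti A k (Prod.fst ∘ i.removeNth v)) := by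
  simp [contractSnd, AlternatingMap.alternatizeUncurryFin_apply,
    exteriorPower.alternatingMapLinearEquiv_symm_apply, Function.comp_def]

/-- The map `N ⊗ ⋀ᵏ M → ⋀ᵏ⁺¹(M × N)`, `x ⊗ ω ↦ x ∧ ω`. -/
def wedgeSnd (A M N : Type*) [CommRing A] [AddCommGroup M] [Module A M] [AddCommGroup N]
    [Module A N] (k : ℕ) : N ⊗[A] (⋀[A]^k M) →ₗ[A] (⋀[A]^(k + 1) (M × N)) :=
  TensorProduct.lift (exteriorPower.alternatingMapLinearEquiv.toLinearMap ∘ₗ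
      (exteriorPower.ιMulti A (k + 1) (M := M × N)).curryLeft) ∘ₗ
    TensorProduct.map (LinearMap.inr A M N) (exteriorPower.map k (LinearMap.inl A M N))

lemma wedgeSnd_tmul (k : ℕ) (x : N) (w : Fin k → M) :
    wedgeSnd A M N k (x ⊗ₜ exteriorPower.ιMulti A k w) =
      exteriorPower.ιMulti A (k + 1) (Matrix.vecCons (0, x) fun i => (w i, 0)) := by
  simp [wedgeSnd]
  rfl

lemma tensor_ext {P : Type*} [AddCommGroup P] [Module A P] {k : ℕ}
    {f g : N ⊗[A] (⋀[A]^k M) →ₗ[A] P}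
    (h : ∀ x w, f (x ⊗ₜ exteriorPower.ιMulti A k w) = g (x ⊗ₜ exteriorPower.ιMulti A k w)) :
    f = g := by
  apply TensorProduct.ext
  ext x w
  exact h x w

lemma contractSnd_comp_wedgeSnd (k : ℕ) :
    contractSnd A M N k ∘ₗ wedgeSnd A M N k = LinearMap.id := by
  refine tensor_ext fun x w => ?_
  rw [LinearMap.comp_apply, wedgeSnd_tmul, contractSnd_ιMulti, Fin.sum_univ_succ]
  simp
  rfl

/-- For `N` cyclic, `⋀ʲ N` vanishes for `j ≥ 2`, so only the terms `j = 0, 1` survive in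
`⋀ᵏ⁺¹(M × N) = ⨁ⱼ ⋀ʲ N ⊗ ⋀ᵏ⁺¹⁻ʲ M`. The natural map `⋀ᵏ⁺¹ M × (N ⊗ ⋀ᵏ M) → ⋀ᵏ⁺¹(M × N)` is split
injective for every `N`; cyclicity gives surjectivity. -/
theorem exteriorPower_prod_cyclic (e : N) (he : Submodule.span A {e} = ⊤) (k : ℕ) :
    Nonempty ((⋀[A]^(k + 1) (M × N)) ≃ₗ[A] (⋀[A]^(k + 1) M) × (N ⊗[A] (⋀[A]^k M))) := by
  let f : (⋀[A]^(k + 1) (M × N)) →ₗ[A] (⋀[A]^(k + 1) M) × (N ⊗[A] (⋀[A]^k M)) :=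
    (exteriorPower.map (k + 1) (LinearMap.fst A M N)).prod (contractSnd A M N k)
  let g : (⋀[A]^(k + 1) M) × (N ⊗[A] (⋀[A]^k M)) →ₗ[A] (⋀[A]^(k + 1) (M × N)) :=
    (exteriorPower.map (k + 1) (LinearMap.inl A M N)).coprod (wedgeSnd A M N k)
  have h1 : exteriorPower.map (k + 1) (LinearMap.fst A M N) ∘ₗ
      exteriorPower.map (k + 1) (LinearMap.inl A M N) = LinearMap.id := by
    rw [← exteriorPower.map_comp, LinearMap.fst_comp_inl, exteriorPower.map_id]
  have h2 : contractSnd A M N k ∘ₗ exteriorPower.map (k + 1) (LinearMap.inl A M N) = 0 := by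
    ext w
    simp [contractSnd_ιMulti]
  have h3 : exteriorPower.map (k + 1) (LinearMap.fst A M N) ∘ₗ wedgeSnd A M N k = 0 := by
    refine tensor_ext fun x w => ?_
    rw [LinearMap.comp_apply, wedgeSnd_tmul, exteriorPower.map_apply_ιMulti]
    exact (exteriorPower.ιMulti A (k + 1)).map_coord_zero 0 rfl
  have hfg : f ∘ₗ g = LinearMap.id := by
    apply LinearMap.prod_ext
    · refine LinearMap.ext fun w => ?_
      exact Prod.ext (by simpa [f, g] using LinearMap.congr_fun h1 w)
        (by simpa [f, g] using LinearMap.congr_fun h2 w)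
    · refine LinearMap.ext fun w => ?_
      exact Prod.ext (by simpa [f, g] using LinearMap.congr_fun h3 w)
        (by simpa [f, g] using LinearMap.congr_fun (contractSnd_comp_wedgeSnd k) w)
  have hg : Function.Surjective g := by
    -- It suffices to hit the wedges of vectors from the generating set `M × 0 ∪ {(0, e)}`.
    have hs : Submodule.span A (Set.range (LinearMap.inl A M N) ∪ {(0, e)}) = ⊤ := by
      rw [Submodule.span_union, ← LinearMap.coe_range, Submodule.span_eq,
        eq_top_iff, ← LinearMap.sup_range_inl_inr]
      refine sup_le_sup_left ?_ _
      rw [LinearMap.range_eq_map, ← he, Submodule.map_span]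
      simp
    rw [← LinearMap.range_eq_top, eq_top_iff, ← exteriorPower.ιMulti_span_of_span A (k + 1) _ hs,
      Submodule.span_le]
    rintro _ ⟨v, hv, rfl⟩
    have hv' : ∀ i, (∃ w, v i = (w, 0)) ∨ v i = (0, e) := by
      intro i
      rcases hv ⟨i, rfl⟩ with ⟨w, hw⟩ | h
      · exact Or.inl ⟨w, hw.symm⟩
      · exact Or.inr h
    by_cases hall : ∀ i, ∃ w, v i = (w, 0)
    · choose w hw using hall
      refine ⟨(exteriorPower.ιMulti A (k + 1) w, 0), ?_⟩
      simp only [g, LinearMap.coprod_apply, exteriorPower.map_apply_ιMulti, map_zero, add_zero]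
      congr 1
      ext1 i
      simp [hw]
    · push Not at hall
      obtain ⟨p, hp⟩ := hall
      have hpe : v p = (0, e) := (hv' p).resolve_left fun ⟨w, hw⟩ => hp w hw
      by_cases hq : ∃ q, q ≠ p ∧ v q = (0, e)
      · -- Two entries equal to `(0, e)`: the wedge vanishes.
        obtain ⟨q, hqp, hqe⟩ := hq
        rw [(exteriorPower.ιMulti A (k + 1)).map_eq_zero_of_eq v (hqe.trans hpe.symm) hqp]
        exact Submodule.zero_mem _
      · -- Exactly one entry equal to `(0, e)`: up to sign it can be moved to the front.
        push Not at hq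
        have : ∀ j, ∃ w, p.removeNth v j = (w, 0) := fun j =>
          (hv' _).resolve_right (hq _ (Fin.succAbove_ne p j))
        choose w hw using this
        rw [← Fin.insertNth_self_removeNth p v, AlternatingMap.map_insertNth, hpe, funext hw,
          ← wedgeSnd_tmul]
        refine Submodule.smul_of_tower_mem _ _ ⟨(0, e ⊗ₜ exteriorPower.ιMulti A k w), ?_⟩
        simp [g]
  have hgi : Function.Injective g :=
    Function.LeftInverse.injective (g := f) fun x => LinearMap.congr_fun hfg x
  exact ⟨(LinearEquiv.ofBijective g ⟨hgi, hg⟩).symm⟩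

end ExteriorProd

/-! ### Base change of exterior powers -/

section BaseChange

variable (R A M : Type*) [CommRing R] [CommRing A] [Algebra R A] [AddCommGroup M] [Module R M]

/-- Elements of `A ⊗ M` square to zero in `A ⊗ ⋀M`. Pure tensors do, and any two elements
anticommute by bilinearity, so the square is additive; this avoids inverting `2`. -/
lemma baseChange_ι_sq (x : A ⊗[R] M) :
    (ExteriorAlgebra.ι R (M := M)).baseChange A x * (ExteriorAlgebra.ι R (M := M)).baseChange A x
      = 0 := by
  have anti : ∀ x y : A ⊗[R] M,
      (ExteriorAlgebra.ι R (M := M)).baseChange A x * (ExteriorAlgebra.ι R (M := M)).baseChange A y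
      + (ExteriorAlgebra.ι R (M := M)).baseChange A y *
        (ExteriorAlgebra.ι R (M := M)).baseChange A x = 0 := by
    intro x y
    induction x with
    | zero => simp
    | add x₁ x₂ h₁ h₂ =>
      rw [map_add, add_mul, mul_add, add_add_add_comm, h₁, h₂, add_zero]
    | tmul a m =>
      induction y with
      | zero => simp
      | add x₁ x₂ h₁ h₂ =>
        rw [map_add, add_mul, mul_add, add_add_add_comm, h₁, h₂, add_zero]
      | tmul b n =>
        simp only [LinearMap.baseChange_tmul, Algebra.TensorProduct.tmul_mul_tmul]
        rw [mul_comm b a, ← TensorProduct.tmul_add, ExteriorAlgebra.ι_add_mul_swap,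
          TensorProduct.tmul_zero]
  induction x with
  | zero => simp
  | tmul a m => simp
  | add x y hx hy =>
    rw [map_add, add_mul, mul_add, mul_add, hx, hy, zero_add, add_zero, anti]

/-- The canonical `A`-algebra map `⋀_A (A ⊗ M) → A ⊗ ⋀_R M`. -/
def exteriorToBaseChange : ExteriorAlgebra A (A ⊗[R] M) →ₐ[A] A ⊗[R] ExteriorAlgebra R M :=
  ExteriorAlgebra.lift A ⟨(ExteriorAlgebra.ι R (M := M)).baseChange A, baseChange_ι_sq R A M⟩

lemma exteriorToBaseChange_ιMulti {n : ℕ} (w : Fin n → M) :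
    exteriorToBaseChange R A M (ExteriorAlgebra.ιMulti A n fun i => 1 ⊗ₜ w i) =
      1 ⊗ₜ ExteriorAlgebra.ιMulti R n w := by
  have h : ∀ x : ExteriorAlgebra R M,
    (1 : A) ⊗ₜ[R] x = (Algebra.TensorProduct.includeRight : _ →ₐ[R] A ⊗[R] _) x := fun _ => rfl
  rw [ExteriorAlgebra.ιMulti_apply, ExteriorAlgebra.ιMulti_apply, h, map_list_prod,
    map_list_prod, List.map_ofFn, List.map_ofFn]
  congr 2
  ext i
  simp [exteriorToBaseChange]

/-- The canonical comparison map `A ⊗ ⋀ⁿ_R M → ⋀ⁿ_A (A ⊗ M)`. -/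
def exteriorPowerFromBaseChange (n : ℕ) : A ⊗[R] (⋀[R]^n M) →ₗ[A] (⋀[A]^n (A ⊗[R] M)) :=
  LinearMap.liftBaseChange A (exteriorPower.alternatingMapLinearEquiv
    { ((exteriorPower.ιMulti A n (M := A ⊗[R] M)).toMultilinearMap.restrictScalars R).compLinearMap
        fun _ => TensorProduct.mk R A M 1 with
      map_eq_zero_of_eq' := fun v _ _ hij hne =>
        (exteriorPower.ιMulti A n (M := A ⊗[R] M)).map_eq_zero_of_eq
          (fun i => 1 ⊗ₜ v i) (congrArg _ hij) hne })

lemma exteriorPowerFromBaseChange_tmul {n : ℕ} (a : A) (w : Fin n → M) :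
    exteriorPowerFromBaseChange R A M n (a ⊗ₜ exteriorPower.ιMulti R n w) =
      a • exteriorPower.ιMulti A n fun i => 1 ⊗ₜ w i := by
  simp [exteriorPowerFromBaseChange]
  rfl

lemma baseChange_span : Submodule.span A (Set.range (TensorProduct.mk R A M 1)) = ⊤ := by
  rw [eq_top_iff]
  rintro x -
  induction x with
  | zero => exact Submodule.zero_mem _
  | add x y hx hy => exact Submodule.add_mem _ hx hy
  | tmul a m =>
    rw [← mul_one a, ← smul_eq_mul, ← TensorProduct.smul_tmul']
    exact Submodule.smul_mem _ _ (Submodule.subset_span ⟨m, rfl⟩)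

/-- Exterior powers commute with base change. A left inverse is obtained by restricting
`exteriorToBaseChange` to degree `n` and projecting `A ⊗ ⋀M` onto `A ⊗ ⋀ⁿ M`. -/
theorem exteriorPowerFromBaseChange_bijective (n : ℕ) :
    Function.Bijective (exteriorPowerFromBaseChange R A M n) := by
  constructor
  · let proj : ExteriorAlgebra R M →ₗ[R] (⋀[R]^n M) :=
      DirectSum.component R ℕ (fun i => ⋀[R]^i M) n ∘ₗ
        (DirectSum.decomposeLinearEquiv (fun i : ℕ => ⋀[R]^i M)).toLinearMap
    have hproj : ∀ x : ⋀[R]^n M, proj x = x := by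
      intro x
      simp only [proj, LinearMap.comp_apply, LinearEquiv.coe_coe,
        DirectSum.decomposeLinearEquiv_apply, DirectSum.decompose_coe]
      exact DirectSum.component.lof_self (M := fun i : ℕ => ⋀[R]^i M) R n x
    let g : (⋀[A]^n (A ⊗[R] M)) →ₗ[A] A ⊗[R] (⋀[R]^n M) :=
      proj.baseChange A ∘ₗ (exteriorToBaseChange R A M).toLinearMap ∘ₗ (⋀[A]^n (A ⊗[R] M)).subtype
    have hg : g ∘ₗ exteriorPowerFromBaseChange R A M n = LinearMap.id := by
      ext w
      simp only [TensorProduct.AlgebraTensorModule.curry_apply,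
        LinearMap.restrictScalars_comp, LinearMap.compAlternatingMap_apply,
        TensorProduct.curry_apply, LinearMap.comp_apply, LinearMap.restrictScalars_apply,
        LinearMap.id_apply]
      rw [exteriorPowerFromBaseChange_tmul, one_smul]
      simp only [g, LinearMap.comp_apply, Submodule.subtype_apply, AlgHom.toLinearMap_apply,
        exteriorPower.ιMulti_apply_coe]
      rw [exteriorToBaseChange_ιMulti, LinearMap.baseChange_tmul,
        ← exteriorPower.ιMulti_apply_coe, hproj]
    exact Function.LeftInverse.injective (g := g) fun x => LinearMap.congr_fun hg x
  · rw [← LinearMap.range_eq_top, eq_top_iff,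
      ← exteriorPower.ιMulti_span_of_span A n _ (baseChange_span R A M), Submodule.span_le]
    rintro _ ⟨v, hv, rfl⟩
    choose w hw using fun i => hv ⟨i, rfl⟩
    refine ⟨1 ⊗ₜ exteriorPower.ιMulti R n w, ?_⟩
    rw [exteriorPowerFromBaseChange_tmul, one_smul]
    congr 1
    ext1 i
    exact hw i

end BaseChange

/-! ### Differentials of truncated polynomial rings -/

section Truncated

variable {R A : Type*} [CommRing R] [CommRing A] [Algebra R A] (φ : R[X] →ₐ[R] A)

/-- Coefficientwise differentiation `∑ aᵢ Xⁱ ↦ ∑ φ(Xⁱ) ⊗ d aᵢ`. -/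
def coeffD : R[X] →+ A ⊗[R] KaehlerDifferential ℤ R where
  toFun p := p.sum fun i a => φ (X ^ i) ⊗ₜ KaehlerDifferential.D ℤ R a
  map_zero' := Polynomial.sum_zero_index _
  map_add' p q := Polynomial.sum_add_index p q _
    (fun i => by rw [map_zero, TensorProduct.tmul_zero])
    (fun i a b => by rw [map_add, TensorProduct.tmul_add])

lemma coeffD_monomial (i : ℕ) (a : R) :
    coeffD φ (monomial i a) = φ (X ^ i) ⊗ₜ KaehlerDifferential.D ℤ R a :=
  Polynomial.sum_monomial_index (n := i) a
    (fun i a => φ (X ^ i) ⊗ₜ KaehlerDifferential.D ℤ R a) (by rw [map_zero, TensorProduct.tmul_zero])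

lemma coeffD_mul (p q : R[X]) : coeffD φ (p * q) = φ p • coeffD φ q + φ q • coeffD φ p := by
  induction p using Polynomial.induction_on' with
  | add => simp only [add_mul, map_add, add_smul, smul_add, add_add_add_comm, *]
  | monomial n a =>
    induction q using Polynomial.induction_on' with
    | add => simp only [mul_add, map_add, add_smul, smul_add, add_add_add_comm, *]
    | monomial k b =>
      have h : ∀ (i : ℕ) (c : R), φ (monomial i c) = c • φ (X ^ i) := by
        intro i c
        rw [← map_smul, X_pow_eq_monomial, smul_monomial, smul_eq_mul, mul_one]
      rw [monomial_mul_monomial, coeffD_monomial, coeffD_monomial, coeffD_monomial, h, h,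
        Derivation.leibniz, TensorProduct.tmul_add, TensorProduct.smul_tmul',
        TensorProduct.smul_tmul', TensorProduct.tmul_smul, TensorProduct.tmul_smul,
        TensorProduct.smul_tmul', TensorProduct.smul_tmul', smul_eq_mul, smul_eq_mul,
        smul_mul_assoc, smul_mul_assoc, ← map_mul, ← map_mul, ← pow_add, ← pow_add, add_comm k n]

lemma coeffD_X_pow (i : ℕ) : coeffD φ (X ^ i) = 0 := by
  rw [X_pow_eq_monomial, coeffD_monomial, Derivation.map_one_eq_zero, TensorProduct.tmul_zero]

/-- Coefficientwise differentiation kills the ideal `(X ^ (m + 1))`, hence descends to a derivation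
of the truncated polynomial ring `A` extending the universal derivation of `R`. -/
lemma exists_coeff_derivation (hφ : Function.Surjective φ) {m : ℕ}
    (hk : RingHom.ker φ = Ideal.span {(X : R[X]) ^ (m + 1)}) :
    ∃ d : Derivation ℤ A (A ⊗[R] KaehlerDifferential ℤ R),
      ∀ a, d (algebraMap R A a) = 1 ⊗ₜ KaehlerDifferential.D ℤ R a := by
  have hX : φ (X ^ (m + 1)) = 0 := by
    rw [← RingHom.mem_ker, hk]
    exact Ideal.mem_span_singleton_self _
  have hker : ∀ p, φ p = 0 → coeffD φ p = 0 := by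
    intro p hp
    rw [← RingHom.mem_ker, hk] at hp
    obtain ⟨q, rfl⟩ := Ideal.mem_span_singleton.mp hp
    rw [coeffD_mul, hX, zero_smul, zero_add, coeffD_X_pow, smul_zero]
  let d₀ : A →+ A ⊗[R] KaehlerDifferential ℤ R :=
    (φ : R[X] →+ A).liftOfSurjective hφ ⟨coeffD φ, hker⟩
  have hd₀ : ∀ p, d₀ (φ p) = coeffD φ p := fun p =>
    (φ : R[X] →+ A).liftOfRightInverse_comp_apply _ (Function.rightInverse_surjInv hφ) _ p
  refine ⟨Derivation.mk' d₀.toIntLinearMap fun x y => ?_, fun a => ?_⟩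
  · obtain ⟨p, rfl⟩ := hφ x
    obtain ⟨q, rfl⟩ := hφ y
    change d₀ _ = φ p • d₀ _ + φ q • d₀ _
    rw [← map_mul, hd₀, hd₀, hd₀, coeffD_mul]
  · change d₀ _ = _
    rw [← φ.commutes, hd₀, Polynomial.algebraMap_eq, ← monomial_zero_left, coeffD_monomial,
      pow_zero, map_one]

/-- The sequence `A ⊗ Ω¹_R → Ω¹_A → Ω¹_{A/R} → 0` is left exact and split: the derivation of
`exists_coeff_derivation` induces a retraction of its first map. -/
theorem kaehler_split (hφ : Function.Surjective φ) {m : ℕ}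
    (hk : RingHom.ker φ = Ideal.span {(X : R[X]) ^ (m + 1)}) :
    Nonempty (KaehlerDifferential ℤ A ≃ₗ[A]
      (A ⊗[R] KaehlerDifferential ℤ R) × KaehlerDifferential R A) := by
  obtain ⟨d, hd⟩ := exists_coeff_derivation φ hφ hk
  have h : d.liftKaehlerDifferential ∘ₗ KaehlerDifferential.mapBaseChange ℤ R A =
      LinearMap.id := by
    ext a
    simp [hd]
  exact ⟨((KaehlerDifferential.exact_mapBaseChange_map ℤ R A).splitInjectiveEquiv
    (KaehlerDifferential.map_surjective ℤ R A) ⟨_, h⟩).1⟩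

theorem kaehler_cyclic (hφ : Function.Surjective φ) :
    Submodule.span A {KaehlerDifferential.D R A (φ X)} = ⊤ := by
  rw [eq_top_iff, ← KaehlerDifferential.span_range_derivation, Submodule.span_le]
  rintro _ ⟨x, rfl⟩
  obtain ⟨p, rfl⟩ := hφ x
  rw [← aeval_X_left_apply p, ← aeval_algHom_apply, Derivation.map_aeval]
  exact Submodule.smul_mem _ _ (Submodule.mem_span_singleton_self _)

theorem exteriorPower_kaehler (hφ : Function.Surjective φ) {m : ℕ}
    (hk : RingHom.ker φ = Ideal.span {(X : R[X]) ^ (m + 1)}) (k : ℕ) :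
    Nonempty ((⋀[A]^(k + 1) (KaehlerDifferential ℤ A)) ≃ₗ[A]
      (A ⊗[R] (⋀[R]^(k + 1) (KaehlerDifferential ℤ R))) ×
        (KaehlerDifferential R A ⊗[R] (⋀[R]^k (KaehlerDifferential ℤ R)))) := by
  obtain ⟨s⟩ := kaehler_split φ hφ hk
  let bc (n : ℕ) : A ⊗[R] (⋀[R]^n (KaehlerDifferential ℤ R)) ≃ₗ[A]
      (⋀[A]^n (A ⊗[R] KaehlerDifferential ℤ R)) :=
    LinearEquiv.ofBijective _
      (exteriorPowerFromBaseChange_bijective R A (KaehlerDifferential ℤ R) n)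
  let e₁ : (⋀[A]^(k + 1) (KaehlerDifferential ℤ A)) ≃ₗ[A]
      (⋀[A]^(k + 1) ((A ⊗[R] KaehlerDifferential ℤ R) × KaehlerDifferential R A)) :=
    LinearEquiv.ofLinearMap (exteriorPower.map (k + 1) s.toLinearMap)
      (exteriorPower.map (k + 1) s.symm.toLinearMap)
      (by rw [← exteriorPower.map_comp, LinearEquiv.comp_symm, exteriorPower.map_id])
      (by rw [← exteriorPower.map_comp, LinearEquiv.symm_comp, exteriorPower.map_id])
  obtain ⟨e₂⟩ := exteriorPower_prod_cyclic (M := A ⊗[R] KaehlerDifferential ℤ R) _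
    (kaehler_cyclic φ hφ) k
  let e₃ : KaehlerDifferential R A ⊗[A] (⋀[A]^k (A ⊗[R] KaehlerDifferential ℤ R)) ≃ₗ[A]
      KaehlerDifferential R A ⊗[R] (⋀[R]^k (KaehlerDifferential ℤ R)) :=
    (TensorProduct.congr (LinearEquiv.refl A _) (bc k).symm).trans
      (TensorProduct.AlgebraTensorModule.cancelBaseChange R A A _ _)
  exact ⟨e₁.trans (e₂.trans ((bc (k + 1)).symm.prodCongr e₃))⟩

end Truncated

end

/-- Equation (7.7) (`eqn:M-Q-C-0-0`) in the proof of Lemma 7.4: for a commutative ring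
`R`, `m ≥ 0` and `n ≥ 1`, there is an isomorphism of `R_m`-modules
`Ω^n_{R_m/ℤ} ≅ (R_m ⊗_R Ω^n_{R/ℤ}) ⊕ (Ω¹_{R_m/R} ⊗_R Ω^{n-1}_{R/ℤ})`, where `Ω^j`
denotes the `j`-th exterior power of `Ω¹`. -/
theorem stmt10 (R : Type*) [CommRing R] (m n : ℕ) (hn : 1 ≤ n) :
    Nonempty
      ((⋀[TruncPoly R m]^n (KaehlerDifferential ℤ (TruncPoly R m))) ≃ₗ[TruncPoly R m]
        ((TruncPoly R m ⊗[R] (⋀[R]^n (KaehlerDifferential ℤ R))) ×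
          ((KaehlerDifferential R (TruncPoly R m)) ⊗[R]
            (⋀[R]^(n - 1) (KaehlerDifferential ℤ R))))) := by
  obtain ⟨k, rfl⟩ : ∃ k, n = k + 1 := ⟨n - 1, by omega⟩
  exact exteriorPower_kaehler (Ideal.Quotient.mkₐ R (Ideal.span {(X : R[X]) ^ (m + 1)}))
    (Ideal.Quotient.mkₐ_surjective R _) (Ideal.Quotient.mkₐ_ker R _) k
end

section
/- Let R be a commutative ℚ-algebra, m ≥ 1 an integer, and R_m = R[t]/(t^{m+1}). Then the universal derivation d : R_m → Ω^1_{R_m/ℤ} is injective on the ideal tR_m; that is, if f ∈ tR_m satisfies df = 0 in Ω^1_{R_m/ℤ}, then f = 0. -/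
/-!
The universal property of `Ω¹` turns `df = 0` into `δ f = 0` for every derivation `δ` of `R_m`.
Applied to the Euler derivation `t · d/dt`, which multiplies the coefficient of `t ^ i` by `i`,
this gives `i * a_i = 0` for all `i ≤ m`, where `f = ∑ a_i t ^ i`. Since `R` is a `ℚ`-algebra,
`a_i = 0` for `1 ≤ i ≤ m`, while `a_0 = 0` because `f ∈ t R_m`.
-/

open Polynomial

/-- The class of the variable `t` in `R_m = R[t]/(t^{m+1})`. -/
noncomputable def truncT (R : Type*) [CommRing R] (m : ℕ) : TruncPoly R m :=
  Ideal.Quotient.mk _ (X : R[X])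

/-- A polynomial dies in `R_m` exactly when its coefficients in degrees `≤ m` vanish. -/
lemma truncPoly_mk_eq_zero_iff (R : Type*) [CommRing R] (m : ℕ) (p : R[X]) :
    (Ideal.Quotient.mk (Ideal.span {(X : R[X]) ^ (m + 1)}) p = 0) ↔
      ∀ i < m + 1, p.coeff i = 0 := by
  rw [Ideal.Quotient.eq_zero_iff_mem, Ideal.mem_span_singleton, X_pow_dvd_iff]

lemma coeff_euler (R : Type*) [CommRing R] (p : R[X]) (i : ℕ) :
    (Polynomial.mkDerivation R (X : R[X]) p).coeff i = (i : R) * p.coeff i := by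
  rw [mkDerivation_apply, smul_eq_mul]
  cases i with
  | zero => simp
  | succ n => rw [coeff_mul_X, coeff_derivative]; push_cast; ring

lemma mk_euler_eq_zero (R : Type*) [CommRing R] (m : ℕ) (p : R[X])
    (hp : Ideal.Quotient.mkₐ R (Ideal.span {(X : R[X]) ^ (m + 1)}) p = 0) :
    Ideal.Quotient.mkₐ R (Ideal.span {(X : R[X]) ^ (m + 1)})
      (Polynomial.mkDerivation R (X : R[X]) p) = 0 := by
  rw [Ideal.Quotient.mkₐ_eq_mk, truncPoly_mk_eq_zero_iff] at hp ⊢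
  intro i hi
  rw [coeff_euler, hp i hi, mul_zero]

/-- The Euler derivation `t · d/dt` of `R_m`. Unlike `d/dt`, the operator `X · d/dX` preserves
the ideal `(X ^ (m + 1))`, so it descends to the quotient. -/
noncomputable def truncEuler (R : Type*) [CommRing R] (m : ℕ) :
    Derivation R (TruncPoly R m) (TruncPoly R m) :=
  Derivation.liftOfSurjective
    (f := Ideal.Quotient.mkₐ R (Ideal.span {(X : R[X]) ^ (m + 1)}))
    (Ideal.Quotient.mkₐ_surjective _ _) (d := Polynomial.mkDerivation R (X : R[X])) (mk_euler_eq_zero R m)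

lemma truncEuler_mk (R : Type*) [CommRing R] (m : ℕ) (p : R[X]) :
    truncEuler R m (Ideal.Quotient.mk _ p) =
      Ideal.Quotient.mk _ (Polynomial.mkDerivation R (X : R[X]) p) :=
  Derivation.liftOfSurjective_apply
    (f := Ideal.Quotient.mkₐ R (Ideal.span {(X : R[X]) ^ (m + 1)}))
    (Ideal.Quotient.mkₐ_surjective _ _) (mk_euler_eq_zero R m) p

/-- The `n = 0` case of Lemma 7.5 (`lem:Inj-*`) over a commutative `ℚ`-algebra: the
universal derivation `d : R_m → Ω¹_{R_m/ℤ}` is injective on the ideal `t R_m`. -/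
theorem stmt12 (R : Type*) [CommRing R] [Algebra ℚ R] (m : ℕ) (hm : 1 ≤ m)
    (f : TruncPoly R m) (hf : f ∈ Ideal.span {truncT R m})
    (hdf : KaehlerDifferential.D ℤ (TruncPoly R m) f = 0) :
    f = 0 := by
  obtain ⟨g, rfl⟩ := Ideal.mem_span_singleton'.mp hf
  obtain ⟨q, rfl⟩ := Ideal.Quotient.mk_surjective g
  rw [truncT, ← map_mul] at hdf ⊢
  have h : truncEuler R m (Ideal.Quotient.mk _ (q * X)) = 0 := by
    have := ((truncEuler R m).restrictScalars ℤ).liftKaehlerDifferential_comp_D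
      (Ideal.Quotient.mk _ (q * X))
    rw [hdf, map_zero] at this
    exact this.symm
  rw [truncEuler_mk, truncPoly_mk_eq_zero_iff] at h
  rw [truncPoly_mk_eq_zero_iff]
  intro i hi
  cases i with
  | zero => simp
  | succ n =>
    have hn := h (n + 1) hi
    rw [coeff_euler] at hn
    have hu : IsUnit ((n + 1 : ℕ) : R) := by
      have := (IsUnit.mk0 ((n + 1 : ℕ) : ℚ) (by positivity)).map (algebraMap ℚ R)
      rwa [map_natCast] at this
    exact hu.mul_right_eq_zero.mp hn
end

section
/- Let R be a commutative ring, m ≥ 0 an integer, and g ∈ R[t] a polynomial with constant term g(0) = 1. Let Λ = {(a,b) ∈ R[t] × R[t] : a − b ∈ (t^{m+1})}, a subring of R[t] × R[t], and let M = {(x,y) ∈ R[t] × R[t] : g·x ≡ y mod (t^{m+1})}, regarded as a Λ-module via componentwise multiplication. Then the sequence 0 → Λ → M → R[t]/(g) → 0 is a short exact sequence of Λ-modules, where the first map is θ(a,b) = (a, b·g) and the second map sends (x,y) to the class of y modulo (g). -/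
open Polynomial

/-!
Since `g(0) = 1`, the polynomial `g` is coprime to `X`, hence to every power of `X`
(`isCoprime_X_pow_of_eval_zero_eq_one`); in other words `g` is a unit modulo `X ^ (m + 1)`.
Surjectivity onto `R[t]/(g)` follows by solving `g * x ≡ y` for `x`. For exactness in the middle,
if `y = g * c` then `g * (x - c) ≡ 0`, so `x ≡ c` modulo `X ^ (m + 1)` and `(x, y)` is the image
of `(x, c)`. Injectivity of `θ` amounts to `g` being a non-zero-divisor
(`eq_of_mul_eq_mul_of_eval_zero_eq_one`): a polynomial killed by `g` is divisible by every power
of `X`. The remaining claims are ring identities.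
-/

theorem isCoprime_X_pow_of_eval_zero_eq_one {R : Type*} [CommRing R] {g : R[X]}
    (hg : g.eval 0 = 1) (n : ℕ) : IsCoprime g (X ^ n) := by
  apply IsCoprime.pow_right
  -- `g = X * divX g + 1`
  refine ⟨1, -g.divX, ?_⟩
  have h := g.divX_mul_X_add
  rw [coeff_zero_eq_eval_zero, hg, C_1] at h
  linear_combination -h

theorem eq_of_mul_eq_mul_of_eval_zero_eq_one {R : Type*} [CommRing R] {g b d : R[X]}
    (hg : g.eval 0 = 1) (h : b * g = d * g) : b = d := by
  rw [← sub_eq_zero]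
  ext n
  have hdvd : X ^ (n + 1) ∣ g * (b - d) := ⟨0, by linear_combination h⟩
  exact X_pow_dvd_iff.mp ((isCoprime_X_pow_of_eval_zero_eq_one hg _).symm.dvd_of_dvd_mul_left hdvd)
    n n.lt_succ_self

/-- The short exact sequence `0 → Λ → M(g) → R[t]/(g) → 0` of `Λ`-modules from the
proof of Lemma 2.1 (`lem:Elem-0`), where `Λ` is the double of `R[t]` along `(t^{m+1})`
and `M(g) = {(x,y) : g·x ≡ y mod (t^{m+1})}`, for a polynomial `g` with `g(0) = 1`.
The first map is `θ(a,b) = (a, b·g)` and the second sends `(x,y)` to `y mod (g)`.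
We express that `Λ` is a subring of `R[t] × R[t]`, that `M(g)` is a `Λ`-submodule,
that the maps are `Λ`-linear, and that the sequence is exact. -/
theorem stmt13 (R : Type*) [CommRing R] (m : ℕ) (g : R[X]) (hg : g.eval 0 = 1) :
    -- `Λ` is a subring of `R[t] × R[t]`:
    ((1 : R[X] × R[X]).1 - (1 : R[X] × R[X]).2 ∈ Ideal.span {(X : R[X]) ^ (m + 1)}) ∧
    (∀ p q : R[X] × R[X],
      p.1 - p.2 ∈ Ideal.span {(X : R[X]) ^ (m + 1)} →
      q.1 - q.2 ∈ Ideal.span {(X : R[X]) ^ (m + 1)} →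
      ((p + q).1 - (p + q).2 ∈ Ideal.span {(X : R[X]) ^ (m + 1)} ∧
        (p * q).1 - (p * q).2 ∈ Ideal.span {(X : R[X]) ^ (m + 1)} ∧
        (-p).1 - (-p).2 ∈ Ideal.span {(X : R[X]) ^ (m + 1)})) ∧
    -- `M(g)` is a `Λ`-submodule of `R[t] × R[t]`:
    (∀ x y : R[X] × R[X],
      g * x.1 - x.2 ∈ Ideal.span {(X : R[X]) ^ (m + 1)} →
      g * y.1 - y.2 ∈ Ideal.span {(X : R[X]) ^ (m + 1)} →
      g * (x + y).1 - (x + y).2 ∈ Ideal.span {(X : R[X]) ^ (m + 1)}) ∧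
    (∀ l x : R[X] × R[X],
      l.1 - l.2 ∈ Ideal.span {(X : R[X]) ^ (m + 1)} →
      g * x.1 - x.2 ∈ Ideal.span {(X : R[X]) ^ (m + 1)} →
      g * (l * x).1 - (l * x).2 ∈ Ideal.span {(X : R[X]) ^ (m + 1)}) ∧
    -- `θ(a,b) = (a, b·g)` maps `Λ` into `M(g)`, is additive, `Λ`-linear and injective:
    (∀ p : R[X] × R[X], p.1 - p.2 ∈ Ideal.span {(X : R[X]) ^ (m + 1)} →
      g * (p.1, p.2 * g).1 - (p.1, p.2 * g).2 ∈ Ideal.span {(X : R[X]) ^ (m + 1)}) ∧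
    (∀ p q : R[X] × R[X], ((p + q).1, (p + q).2 * g) = (p.1, p.2 * g) + (q.1, q.2 * g)) ∧
    (∀ l p : R[X] × R[X], ((l * p).1, (l * p).2 * g) = l * (p.1, p.2 * g)) ∧
    (∀ p q : R[X] × R[X], (p.1, p.2 * g) = (q.1, q.2 * g) → p = q) ∧
    -- the second map `(x,y) ↦ y mod (g)` is additive and `Λ`-linear
    -- (where `Λ` acts on `R[t]/(g)` through the second coordinate):
    (∀ x y : R[X] × R[X],
      Ideal.Quotient.mk (Ideal.span {g}) (x + y).2 =
        Ideal.Quotient.mk (Ideal.span {g}) x.2 + Ideal.Quotient.mk (Ideal.span {g}) y.2) ∧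
    (∀ l x : R[X] × R[X],
      Ideal.Quotient.mk (Ideal.span {g}) (l * x).2 =
        Ideal.Quotient.mk (Ideal.span {g}) l.2 * Ideal.Quotient.mk (Ideal.span {g}) x.2) ∧
    -- the second map is surjective from `M(g)` onto `R[t]/(g)`:
    (∀ z : R[X] ⧸ Ideal.span {g}, ∃ x : R[X] × R[X],
      g * x.1 - x.2 ∈ Ideal.span {(X : R[X]) ^ (m + 1)} ∧
      Ideal.Quotient.mk (Ideal.span {g}) x.2 = z) ∧
    -- exactness at `M(g)`: the kernel of the second map is the image of `θ`:
    (∀ x : R[X] × R[X], g * x.1 - x.2 ∈ Ideal.span {(X : R[X]) ^ (m + 1)} →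
      (Ideal.Quotient.mk (Ideal.span {g}) x.2 = 0 ↔
        ∃ p : R[X] × R[X], p.1 - p.2 ∈ Ideal.span {(X : R[X]) ^ (m + 1)} ∧
          (p.1, p.2 * g) = x)) := by
  simp only [Ideal.mem_span_singleton]
  refine ⟨by simp, ?_, ?_, ?_, ?_, ?_, ?_, ?_, fun x y => map_add _ _ _,
    fun l x => map_mul _ _ _, ?_, ?_⟩
  · rintro ⟨a, b⟩ ⟨c, d⟩ ⟨u, hu⟩ ⟨v, hv⟩
    dsimp only at hu hv
    exact ⟨⟨u + v, by dsimp; linear_combination hu + hv⟩,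
      ⟨u * c + b * v, by dsimp; linear_combination c * hu + b * hv⟩,
      ⟨-u, by dsimp; linear_combination -hu⟩⟩
  · rintro ⟨a, b⟩ ⟨c, d⟩ ⟨u, hu⟩ ⟨v, hv⟩
    exact ⟨u + v, by dsimp at hu hv ⊢; linear_combination hu + hv⟩
  · rintro ⟨a, b⟩ ⟨x, y⟩ ⟨u, hu⟩ ⟨v, hv⟩
    exact ⟨u * g * x + b * v, by
      dsimp at hu hv ⊢; linear_combination g * x * hu + b * hv⟩
  · rintro ⟨a, b⟩ ⟨u, hu⟩
    exact ⟨g * u, by dsimp at hu ⊢; linear_combination g * hu⟩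
  · intro p q
    ext1
    · rfl
    · exact add_mul _ _ _
  · intro l p
    ext1
    · rfl
    · exact mul_assoc _ _ _
  · rintro ⟨a, b⟩ ⟨c, d⟩ h
    obtain ⟨h₁, h₂⟩ := Prod.mk.inj h
    exact Prod.ext h₁ (eq_of_mul_eq_mul_of_eval_zero_eq_one hg h₂)
  · intro z
    obtain ⟨y, rfl⟩ := Ideal.Quotient.mk_surjective z
    -- `u` is an inverse of `g` modulo `X ^ (m + 1)`, so `(u * y, y)` lies in `M(g)`.
    obtain ⟨u, v, huv⟩ := isCoprime_X_pow_of_eval_zero_eq_one hg (m + 1)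
    exact ⟨(u * y, y), ⟨-v * y, by dsimp; linear_combination y * huv⟩, rfl⟩
  · rintro ⟨x, y⟩ hxy
    dsimp only at hxy
    rw [Ideal.Quotient.eq_zero_iff_mem, Ideal.mem_span_singleton]
    constructor
    · rintro ⟨c, rfl⟩
      -- `X ^ (m + 1)` divides `g * (x - c)`, and `g` can be cancelled.
      rw [← mul_sub] at hxy
      exact ⟨(x, c), (isCoprime_X_pow_of_eval_zero_eq_one hg (m + 1)).symm.dvd_of_dvd_mul_left hxy,
        Prod.ext rfl (mul_comm _ _)⟩
    · rintro ⟨⟨a, b⟩, -, h⟩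
      exact ⟨b, by rw [← (Prod.mk.inj h).2, mul_comm]⟩
end
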